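/- Fix an integer m ≥ 1 and a real ε ∈ (0, m+1). Then there exists a constant C > 0 such that for all n ≥ 2, the probability that there exists a set K, contained either in V₁ or in V₂, with 2 ≤ |K| ≤ (m+1−ε)·log n and |Γ(K)| < |K| in B_{n,m}, is at most C·n^{−ε/(m+1)}. -/

import Mathlib

/-!
If `|K| = k` and `|Γ(K)| < k`, then `Γ(K) ⊆ L` for some `L` with `|L| = k - 1`, so a union bound
over pairs `(K, L)` suffices. By the symmetry between rows and columns (`pr_swap`, `nbrCol_eq`)
only sets of rows need to be treated.

For fixed `(K, L)`, the event `Γ(K) ⊆ L` splits into an event about `(f₁, g₂)` and an event about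
`(g₁, f₂)`, which are independent (`event_bound`).

* `f₁` maps `K` into `L`, with probability `((k - 1) / n) ^ k`. For any `f₁` at most `n / (m + 1)`
  columns are popular, and the unpopular columns outside `L` must avoid `K` under `g₂`; this costs
  a factor of about `exp (-k + k / (m + 1))` (`avoid_bound`).
* No column outside `L` selects a row of `K` under `g₁`: a factor of about `exp (-k)`. Unpopular
  rows of `K` must be mapped into `L` by `f₂`. If all rows of `K` were unpopular this would give
  `((k - 1) / n) ^ k`. A popular row saves a factor `n / (k - 1)`, but it needs at least two
  selections from `L` into `K`, so weighting every such selection by `√n` is enough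
  (`weight_bound`), and the expected weight is at most `exp (k ^ 2 / √n)` (`weight_sum`).

All correction terms are at most `exp (3 k ^ 2 / √n)`, which is bounded for `k = O(log n)`
(`log_sq_bound`). Stirling's formula bounds the number of pairs times
`((k - 1) / n) ^ (2 k) * exp (-2 k)` by `1 / n` (`choose_bound`), so sets of size `k` contribute
`O(exp (k / (m + 1)) / n)`. This geometric series in `k` is dominated by its last term, where
`k = (m + 1 - ε) log n` gives `n ^ (1 - ε / (m + 1)) / n` (`geom_bound`).
-/

/-- Sample space: quadruples `ω = (f₁, f₂, g₁, g₂)` of functions `Fin n → Fin n`.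
`f₁ i` (`f₂ i`) is the first-round (second-round) selection of row `i`;
`g₁ j` (`g₂ j`) is the first-round (second-round) selection of column `j`. -/
abbrev Omega (n : ℕ) :=
  (Fin n → Fin n) × (Fin n → Fin n) × (Fin n → Fin n) × (Fin n → Fin n)

/-- Row `i` is unpopular: it was chosen by at most `m` columns in the first round. -/
def RowUnpopular (n m : ℕ) (ω : Omega n) (i : Fin n) : Prop :=
  (Finset.univ.filter fun j => ω.2.2.1 j = i).card ≤ m

/-- Column `j` is unpopular: it was chosen by at most `m` rows in the first round. -/
def ColUnpopular (n m : ℕ) (ω : Omega n) (j : Fin n) : Prop :=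
  (Finset.univ.filter fun i => ω.1 i = j).card ≤ m

/-- `(i, j)` is an edge of `B_{n,m}(ω)`. -/
def IsEdge (n m : ℕ) (ω : Omega n) (i j : Fin n) : Prop :=
  ω.1 i = j ∨ ω.2.2.1 j = i ∨ (RowUnpopular n m ω i ∧ ω.2.1 i = j) ∨
    (ColUnpopular n m ω j ∧ ω.2.2.2 j = i)

/-- `B_{n,m}(ω)` has a perfect matching. -/
def HasPerfectMatching (n m : ℕ) (ω : Omega n) : Prop :=
  ∃ π : Fin n ≃ Fin n, ∀ i, IsEdge n m ω i (π i)

open Classical in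
/-- Probability of an event under the uniform measure on `Omega n`. -/
noncomputable def pr (n : ℕ) (P : Omega n → Prop) : ℝ :=
  ((Finset.univ.filter fun ω : Omega n => P ω).card : ℝ) / (Fintype.card (Omega n) : ℝ)

open Classical in
/-- The neighbourhood `Γ(K) ⊆ V₂` of a set `K ⊆ V₁` of rows in `B_{n,m}(ω)`. -/
noncomputable def nbrRow (n m : ℕ) (ω : Omega n) (K : Finset (Fin n)) : Finset (Fin n) :=
  Finset.univ.filter fun j => ∃ i ∈ K, IsEdge n m ω i j

open Classical in
/-- The neighbourhood `Γ(K) ⊆ V₁` of a set `K ⊆ V₂` of columns in `B_{n,m}(ω)`. -/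
noncomputable def nbrCol (n m : ℕ) (ω : Omega n) (K : Finset (Fin n)) : Finset (Fin n) :=
  Finset.univ.filter fun i => ∃ j ∈ K, IsEdge n m ω i j

/-! ### Counting functions under local constraints -/

open Classical in
lemma card_maps (n : ℕ) (hn : 0 < n) (S T : Finset (Fin n)) :
    (∑ f : Fin n → Fin n, if ∀ i ∈ S, f i ∈ T then (1 : ℝ) else 0)
      = (n : ℝ) ^ n * ((T.card : ℝ) / n) ^ S.card := by
  have hn' : (n : ℝ) ≠ 0 := by positivity
  have h1 : (Finset.univ.filter fun f : Fin n → Fin n => ∀ i ∈ S, f i ∈ T)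
      = Fintype.piFinset (fun i => if i ∈ S then T else Finset.univ) := by
    ext f
    simp only [Finset.mem_filter, Finset.mem_univ, true_and, Fintype.mem_piFinset]
    refine forall_congr' fun i => ?_
    by_cases h : i ∈ S <;> simp [h]
  have hle : S.card ≤ n := by simpa using Finset.card_le_univ S
  rw [Finset.sum_boole, h1, Fintype.card_piFinset]
  have h2 : ∀ i, (if i ∈ S then T else Finset.univ).card = if i ∈ S then T.card else n := by
    intro i; split_ifs <;> simp
  simp only [h2, Finset.prod_ite, Finset.prod_const, Finset.filter_mem_eq_inter,
    Finset.univ_inter]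
  have h3 : (Finset.univ.filter fun i => i ∉ S).card = n - S.card := by
    rw [Finset.filter_not, Finset.filter_mem_eq_inter, Finset.univ_inter,
      ← Finset.compl_eq_univ_sdiff, Finset.card_compl, Fintype.card_fin]
  rw [h3]
  push_cast
  have h4 : (n : ℝ) ^ n = (n : ℝ) ^ (n - S.card) * (n : ℝ) ^ S.card := by
    rw [← pow_add, Nat.sub_add_cancel hle]
  rw [h4, div_pow]
  field_simp

/-- Each popular `j ∈ S` is selected at least `m + 1` times, and all these selections are made by
elements of `T`. -/
lemma card_popular (n m : ℕ) (f : Fin n → Fin n) (S T : Finset (Fin n))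
    (hT : ∀ j ∈ S, ∀ i, f i = j → i ∈ T) :
    (m + 1) * (S.filter fun j => ¬ (Finset.univ.filter fun i => f i = j).card ≤ m).card
      ≤ (T.filter fun i => f i ∈ S).card := by
  set P := S.filter fun j => ¬ (Finset.univ.filter fun i => f i = j).card ≤ m with hP
  rw [mul_comm]
  have h : ∀ j ∈ P, m + 1 ≤ ((T.filter fun i => f i ∈ P).filter fun i => f i = j).card := by
    intro j hj
    have hj' := (Finset.mem_filter.1 hj)
    have : (Finset.univ.filter fun i => f i = j)
        ⊆ ((T.filter fun i => f i ∈ P).filter fun i => f i = j) := by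
      intro i hi
      have hi' : f i = j := by simpa using hi
      simp only [Finset.mem_filter]
      exact ⟨⟨hT j hj'.1 i hi', hi' ▸ hj⟩, hi'⟩
    have := Finset.card_le_card this
    omega
  have h2 : ∀ i ∈ (T.filter fun i => f i ∈ P), f i ∈ P := fun i hi => (Finset.mem_filter.1 hi).2
  have h3 := Finset.card_eq_sum_card_fiberwise h2
  calc P.card * (m + 1) = ∑ j ∈ P, (m + 1) := by simp
    _ ≤ ∑ j ∈ P, ((T.filter fun i => f i ∈ P).filter fun i => f i = j).card :=
      Finset.sum_le_sum h
    _ = (T.filter fun i => f i ∈ P).card := h3.symm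
    _ ≤ _ := by
      apply Finset.card_le_card
      intro i hi
      simp only [Finset.mem_filter, hP] at hi ⊢
      exact ⟨hi.1, hi.2.1⟩

/-- Whatever the first-round choices `f`, at most `n / (m + 1)` columns are popular. Hence the
unpopular columns outside `L` all avoid `K` in the second round with probability at most
about `exp (-|K| m / (m + 1))`. -/
lemma avoid_bound (n m : ℕ) (hn : 0 < n) (f : Fin n → Fin n) (K L : Finset (Fin n))
    (hL : L.card + 1 = K.card) :
    (∑ g : Fin n → Fin n,
        if ∀ j ∈ Lᶜ.filter (fun j => (Finset.univ.filter fun i => f i = j).card ≤ m), g j ∈ Kᶜ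
        then (1 : ℝ) else 0)
      ≤ (n : ℝ) ^ n * Real.exp (-(K.card : ℝ) + K.card / (m + 1) + (K.card : ℝ) ^ 2 / n) := by
  rw [card_maps n hn]
  have hn' : (0 : ℝ) < n := by positivity
  have hK : K.card ≤ n := by simpa using Finset.card_le_univ K
  have hp := card_popular n m f Lᶜ Finset.univ (fun _ _ _ _ => Finset.mem_univ _)
  have hp2 : (Finset.univ.filter fun i => f i ∈ Lᶜ).card ≤ n := by
    simpa using Finset.card_le_univ (Finset.univ.filter fun i => f i ∈ Lᶜ)
  have hsum := Finset.card_filter_add_card_filter_not (s := Lᶜ)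
    (fun j => (Finset.univ.filter fun i => f i = j).card ≤ m)
  set U := Lᶜ.filter (fun j => (Finset.univ.filter fun i => f i = j).card ≤ m)
  set P := Lᶜ.filter (fun j => ¬ (Finset.univ.filter fun i => f i = j).card ≤ m)
  rw [Finset.card_compl, Fintype.card_fin] at hsum
  have hsum' : (U.card : ℝ) + P.card + L.card = n := by
    have : U.card + P.card + L.card = n := by omega
    exact_mod_cast this
  have hL' : (L.card : ℝ) + 1 = K.card := by exact_mod_cast hL
  have hP : (P.card : ℝ) ≤ n / (m + 1) := by
    rw [le_div_iff₀ (by positivity), mul_comm]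
    exact_mod_cast hp.trans hp2
  have hKc : (Kᶜ.card : ℝ) = n - K.card := by
    rw [Finset.card_compl, Fintype.card_fin, Nat.cast_sub hK]
  gcongr
  have h1 : (Kᶜ.card : ℝ) / n ≤ Real.exp (-(K.card / n)) := by
    have := Real.add_one_le_exp (-((K.card : ℝ) / n))
    have e : (Kᶜ.card : ℝ) / n = -((K.card : ℝ) / n) + 1 := by rw [hKc]; field_simp; ring
    linarith
  calc _ ≤ (Real.exp (-(K.card / n))) ^ U.card := by gcongr
    _ = Real.exp (U.card * (-(K.card / n))) := by rw [← Real.exp_nat_mul]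
    _ ≤ _ := by
      apply Real.exp_le_exp.2
      have h2 : (n : ℝ) - n / (m + 1) - K.card ≤ U.card := by linarith
      have h3 : (0 : ℝ) ≤ K.card / n := by positivity
      have h4 := mul_le_mul_of_nonneg_right h2 h3
      have h5 : ((n : ℝ) - n / (m + 1) - K.card) * (K.card / n)
          = K.card - K.card / (m + 1) - (K.card : ℝ) ^ 2 / n := by
        field_simp
      linarith

/-- If no column outside `L` selects a row of `K`, each popular row of `K` uses up at least two
columns of `L`, so `p` popular rows force `2 p` selections from `L` into `K`. The factor
`(n / |L|) ^ p` lost through popular rows is therefore at most `√n` per such selection. -/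
lemma weight_bound (n m : ℕ) (hm : 1 ≤ m) (hn : 0 < n) (g : Fin n → Fin n)
    (K L : Finset (Fin n)) (hL1 : 1 ≤ L.card) (hB : ∀ j ∈ Lᶜ, g j ∈ Kᶜ) :
    ((L.card : ℝ) / n) ^ (K.filter fun i => (Finset.univ.filter fun j => g j = i).card ≤ m).card
      ≤ ((L.card : ℝ) / n) ^ K.card * √n ^ (L.filter fun j => g j ∈ K).card := by
  have hn' : (0 : ℝ) < n := by positivity
  have hp := card_popular n m g K L (by
    intro i hi j hj
    by_contra h
    have := hB j (by simpa using h)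
    rw [hj] at this
    simp [hi] at this)
  have hsum := Finset.card_filter_add_card_filter_not (s := K)
    (fun i => (Finset.univ.filter fun j => g j = i).card ≤ m)
  set u := (K.filter fun i => (Finset.univ.filter fun j => g j = i).card ≤ m).card
  set p := (K.filter fun i => ¬ (Finset.univ.filter fun j => g j = i).card ≤ m).card
  have h2p : 2 * p ≤ (L.filter fun j => g j ∈ K).card :=
    (Nat.mul_le_mul_right p (by omega)).trans hp
  have hl : (1 : ℝ) ≤ L.card := by exact_mod_cast hL1
  have hs : (1 : ℝ) ≤ √n := by
    rw [Real.one_le_sqrt]; exact_mod_cast hn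
  calc ((L.card : ℝ) / n) ^ u = ((L.card : ℝ) / n) ^ u * 1 := by ring
    _ ≤ ((L.card : ℝ) / n) ^ u * (L.card : ℝ) ^ p := by
      gcongr; exact one_le_pow₀ hl
    _ = ((L.card : ℝ) / n) ^ (u + p) * √n ^ (2 * p) := by
      rw [pow_mul, Real.sq_sqrt hn'.le, pow_add, div_pow _ _ p]
      field_simp
    _ ≤ _ := by
      rw [hsum]; gcongr

open Classical in
/-- The sum factors over the values `g j`: a column outside `L` contributes `n - |K|`, a column
of `L` contributes `|K| √n + (n - |K|)`. -/
lemma weight_sum (n : ℕ) (hn : 0 < n) (K L : Finset (Fin n)) (hL : L.card + 1 = K.card) :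
    (∑ g : Fin n → Fin n,
      if ∀ j ∈ Lᶜ, g j ∈ Kᶜ then √n ^ (L.filter fun j => g j ∈ K).card else (0 : ℝ))
      ≤ (n : ℝ) ^ n * Real.exp (-(K.card : ℝ) + (K.card : ℝ) ^ 2 / n
          + (K.card : ℝ) ^ 2 / √n) := by
  have hn' : (0 : ℝ) < n := by positivity
  have hs : (0 : ℝ) < √n := by positivity
  have hK : K.card ≤ n := by simpa using Finset.card_le_univ K
  have hLn : L.card ≤ n := by omega
  have hKr : (K.card : ℝ) ≤ n := by exact_mod_cast hK
  have hL' : (L.card : ℝ) + 1 = K.card := by exact_mod_cast hL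
  -- the weight with which column `j` selects row `i`
  let h : Fin n → Fin n → ℝ := fun j i =>
    if j ∈ L then (if i ∈ K then √n else 1) else (if i ∈ K then 0 else 1)
  have e1 : ∀ g : Fin n → Fin n,
      (if ∀ j ∈ Lᶜ, g j ∈ Kᶜ then √n ^ (L.filter fun j => g j ∈ K).card else (0 : ℝ))
        = ∏ j, h j (g j) := by
    intro g
    have : ∏ j, h j (g j) = (∏ j ∈ L, if g j ∈ K then √n else 1)
        * ∏ j ∈ Lᶜ, (if g j ∈ K then (0 : ℝ) else 1) := by
      rw [← Finset.prod_mul_prod_compl L]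
      congr 1
      · exact Finset.prod_congr rfl fun j hj => by simp [h, hj]
      · exact Finset.prod_congr rfl fun j hj => by
          have : j ∉ L := by simpa using hj
          simp [h, this]
    rw [this]
    split_ifs with hB
    · rw [Finset.prod_eq_one (s := Lᶜ), Finset.prod_ite]
      · simp
      · intro j hj
        have := hB j hj
        simp only [Finset.mem_compl] at this
        simp [this]
    · push Not at hB
      obtain ⟨j, hj, hj2⟩ := hB
      rw [Finset.prod_eq_zero (s := Lᶜ) hj, mul_zero]
      simp only [Finset.mem_compl, not_not] at hj2
      simp [hj2]
  have hc : (Finset.univ.filter fun i => i ∉ K).card = n - K.card := by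
    rw [Finset.filter_not, Finset.filter_mem_eq_inter, Finset.univ_inter,
      ← Finset.compl_eq_univ_sdiff, Finset.card_compl, Fintype.card_fin]
  have e2 : ∀ j, ∑ i, h j i
      = if j ∈ L then K.card * √n + (n - K.card) else (n : ℝ) - K.card := by
    intro j
    by_cases hj : j ∈ L
    · simp [h, hj, Finset.sum_ite, hc, Nat.cast_sub hK]
    · simp [h, hj, Finset.sum_ite, hc, Nat.cast_sub hK]
  have e3 : ∑ g : Fin n → Fin n, ∏ j, h j (g j) = ∏ j, ∑ i, h j i := by
    rw [Finset.prod_univ_sum, Fintype.piFinset_univ]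
  have hc2 : (Finset.univ.filter fun i => i ∉ L).card = n - L.card := by
    rw [Finset.filter_not, Finset.filter_mem_eq_inter, Finset.univ_inter,
      ← Finset.compl_eq_univ_sdiff, Finset.card_compl, Fintype.card_fin]
  rw [Finset.sum_congr rfl fun g _ => e1 g, e3, Finset.prod_congr rfl fun j _ => e2 j,
    Finset.prod_ite]
  simp only [Finset.prod_const, Finset.filter_mem_eq_inter, Finset.univ_inter, hc2]
  have b1 : (K.card : ℝ) * √n + (n - K.card) ≤ n * Real.exp (K.card / √n) := by
    have h1 := Real.add_one_le_exp ((K.card : ℝ) / √n)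
    have h2 : (n : ℝ) * (K.card / √n) = K.card * √n := by
      have := Real.sq_sqrt hn'.le
      field_simp
      rw [this]; ring
    have h3 := mul_le_mul_of_nonneg_left h1 hn'.le
    have : (0 : ℝ) ≤ K.card := by positivity
    linarith
  have b2 : (n : ℝ) - K.card ≤ n * Real.exp (-(K.card / n)) := by
    have h1 := mul_le_mul_of_nonneg_left (Real.add_one_le_exp (-((K.card : ℝ) / n))) hn'.le
    have h2 : (n : ℝ) * (-(K.card / n) + 1) = n - K.card := by field_simp; ring
    linarith
  have b3 : (0 : ℝ) ≤ n - K.card := by linarith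
  have hLle : (L.card : ℝ) ≤ K.card := by linarith
  calc _ ≤ (n * Real.exp (K.card / √n)) ^ L.card
          * (n * Real.exp (-(K.card / n))) ^ (n - L.card) := by gcongr
    _ = (n : ℝ) ^ n * Real.exp (L.card * (K.card / √n)
          + (n - L.card) * (-(K.card / n))) := by
      rw [mul_pow, mul_pow, ← Real.exp_nat_mul, ← Real.exp_nat_mul, Real.exp_add,
        Nat.cast_sub hLn]
      have : (n : ℝ) ^ n = (n : ℝ) ^ L.card * (n : ℝ) ^ (n - L.card) := by
        rw [← pow_add, Nat.add_sub_cancel' hLn]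
      rw [this]; ring
    _ ≤ _ := by
      refine mul_le_mul_of_nonneg_left (Real.exp_le_exp.2 ?_) (by positivity)
      have h1 : (L.card : ℝ) * (K.card / √n) ≤ (K.card : ℝ) ^ 2 / √n := by
        rw [sq, mul_div_assoc]; gcongr
      have h2 : ((n : ℝ) - L.card) * (-(K.card / n))
          = -(K.card : ℝ) + L.card * (K.card / n) := by
        field_simp; ring
      have h3 : (L.card : ℝ) * (K.card / n) ≤ (K.card : ℝ) ^ 2 / n := by
        rw [sq, mul_div_assoc]; gcongr
      linarith

/-! ### The probability that `Γ(K) ⊆ L` -/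

open Classical in
/-- The pairs `(f₁, g₂)` and `(g₁, f₂)` are independent, and `Γ(K) ⊆ L` is the conjunction of an
event about the first pair with an event about the second. -/
lemma event_bound (n m : ℕ) (hm : 1 ≤ m) (hn : 0 < n) (K L : Finset (Fin n))
    (hL : L.card + 1 = K.card) (hL1 : 1 ≤ L.card) :
    ((Finset.univ.filter fun ω : Omega n => nbrRow n m ω K ⊆ L).card : ℝ)
      ≤ ((n : ℝ) ^ n) ^ 4 * ((L.card : ℝ) / n) ^ (2 * K.card) *
        Real.exp (-2 * (K.card : ℝ) + K.card / (m + 1) + 3 * (K.card : ℝ) ^ 2 / √n) := by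
  have hn' : (0 : ℝ) < n := by positivity
  let a : (Fin n → Fin n) → ℝ := fun f₁ => if ∀ i ∈ K, f₁ i ∈ L then 1 else 0
  let d : (Fin n → Fin n) → (Fin n → Fin n) → ℝ := fun f₁ g₂ =>
    if ∀ j ∈ Lᶜ.filter (fun j => (Finset.univ.filter fun i => f₁ i = j).card ≤ m), g₂ j ∈ Kᶜ
    then 1 else 0
  let b : (Fin n → Fin n) → ℝ := fun g₁ => if ∀ j ∈ Lᶜ, g₁ j ∈ Kᶜ then 1 else 0
  let c : (Fin n → Fin n) → (Fin n → Fin n) → ℝ := fun g₁ f₂ =>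
    if ∀ i ∈ K.filter (fun i => (Finset.univ.filter fun j => g₁ j = i).card ≤ m), f₂ i ∈ L
    then 1 else 0
  have ha : ∀ f, 0 ≤ a f := fun f => by simp only [a]; split_ifs <;> norm_num
  have hb : ∀ f, 0 ≤ b f := fun f => by simp only [b]; split_ifs <;> norm_num
  have hc : ∀ f g, 0 ≤ c f g := fun f g => by simp only [c]; split_ifs <;> norm_num
  have key : ∀ ω : Omega n, (if nbrRow n m ω K ⊆ L then (1 : ℝ) else 0)
      ≤ a ω.1 * (b ω.2.2.1 * c ω.2.2.1 ω.2.1) * d ω.1 ω.2.2.2 := by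
    intro ω
    have hd : ∀ f g, 0 ≤ d f g := fun f g => by simp only [d]; split_ifs <;> norm_num
    by_cases h : nbrRow n m ω K ⊆ L
    · have h' : ∀ i ∈ K, ∀ j, IsEdge n m ω i j → j ∈ L := fun i hi j hij =>
        h (by simp only [nbrRow, Finset.mem_filter, Finset.mem_univ, true_and]
              exact ⟨i, hi, hij⟩)
      have e1 : a ω.1 = 1 := if_pos fun i hi => h' i hi _ (Or.inl rfl)
      have e2 : b ω.2.2.1 = 1 := if_pos fun j hj => by
        simp only [Finset.mem_compl] at hj ⊢
        exact fun hK => hj (h' _ hK j (Or.inr (Or.inl rfl)))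
      have e3 : c ω.2.2.1 ω.2.1 = 1 := if_pos fun i hi => by
        rw [Finset.mem_filter] at hi
        exact h' i hi.1 _ (Or.inr (Or.inr (Or.inl ⟨hi.2, rfl⟩)))
      have e4 : d ω.1 ω.2.2.2 = 1 := if_pos fun j hj => by
        rw [Finset.mem_filter] at hj
        simp only [Finset.mem_compl] at hj ⊢
        exact fun hK => hj.1 (h' _ hK j (Or.inr (Or.inr (Or.inr ⟨hj.2, rfl⟩))))
      rw [e1, e2, e3, e4, if_pos h]; norm_num
    · rw [if_neg h]
      exact mul_nonneg (mul_nonneg (ha _) (mul_nonneg (hb _) (hc _ _))) (hd _ _)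
  set k : ℝ := (K.card : ℝ) with hk
  set X : ℝ := (n : ℝ) ^ n * Real.exp (-k + k / (m + 1) + k ^ 2 / n) with hX
  have hd : ∀ f, ∑ g, d f g ≤ X := fun f => avoid_bound n m hn f K L hL
  have hA : ∑ f, a f = (n : ℝ) ^ n * ((L.card : ℝ) / n) ^ K.card := card_maps n hn K L
  have hbc : ∀ g, b g * ∑ f, c g f
      ≤ (n : ℝ) ^ n * ((L.card : ℝ) / n) ^ K.card *
        (if ∀ j ∈ Lᶜ, g j ∈ Kᶜ then √n ^ (L.filter fun j => g j ∈ K).card else (0 : ℝ)) := by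
    intro g
    simp only [b, c]
    rw [card_maps n hn]
    split_ifs with hB
    · have := weight_bound n m hm hn g K L hL1 hB
      rw [one_mul, mul_assoc]
      gcongr
    · simp
  have hBC : ∑ g, b g * ∑ f, c g f
      ≤ (n : ℝ) ^ n * ((L.card : ℝ) / n) ^ K.card *
        ((n : ℝ) ^ n * Real.exp (-k + k ^ 2 / n + k ^ 2 / √n)) := by
    refine (Finset.sum_le_sum fun g _ => hbc g).trans ?_
    rw [← Finset.mul_sum]
    exact mul_le_mul_of_nonneg_left (weight_sum n hn K L hL) (by positivity)
  calc ((Finset.univ.filter fun ω : Omega n => nbrRow n m ω K ⊆ L).card : ℝ)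
      = ∑ ω : Omega n, if nbrRow n m ω K ⊆ L then (1 : ℝ) else 0 := by
        rw [Finset.sum_boole]
    _ ≤ ∑ ω : Omega n, a ω.1 * (b ω.2.2.1 * c ω.2.2.1 ω.2.1) * d ω.1 ω.2.2.2 :=
        Finset.sum_le_sum fun ω _ => key ω
    _ = ∑ f₁, ∑ f₂, ∑ g₁, a f₁ * (b g₁ * c g₁ f₂) * ∑ g₂, d f₁ g₂ := by
        simp only [Fintype.sum_prod_type, Finset.mul_sum]
    _ ≤ ∑ f₁, ∑ f₂, ∑ g₁, a f₁ * (b g₁ * c g₁ f₂) * X := by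
        refine Finset.sum_le_sum fun f₁ _ => Finset.sum_le_sum fun f₂ _ =>
          Finset.sum_le_sum fun g₁ _ => mul_le_mul_of_nonneg_left (hd f₁) ?_
        exact mul_nonneg (ha _) (mul_nonneg (hb _) (hc _ _))
    _ = (∑ f₁, a f₁) * (∑ g₁, b g₁ * ∑ f₂, c g₁ f₂) * X := by
        have : ∑ g₁, b g₁ * ∑ f₂, c g₁ f₂ = ∑ f₂, ∑ g₁, b g₁ * c g₁ f₂ := by
          rw [Finset.sum_comm]
          simp only [Finset.mul_sum]
        rw [this, Finset.sum_mul, Finset.sum_mul]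
        simp only [Finset.mul_sum, Finset.sum_mul]
    _ ≤ ((n : ℝ) ^ n * ((L.card : ℝ) / n) ^ K.card) *
          ((n : ℝ) ^ n * ((L.card : ℝ) / n) ^ K.card *
          ((n : ℝ) ^ n * Real.exp (-k + k ^ 2 / n + k ^ 2 / √n))) * X := by
        rw [hA]
        gcongr
    _ = ((n : ℝ) ^ n) ^ 4 * ((L.card : ℝ) / n) ^ (2 * K.card) *
          Real.exp ((-k + k ^ 2 / n + k ^ 2 / √n) + (-k + k / (m + 1) + k ^ 2 / n)) := by
        rw [hX, Real.exp_add (-k + k ^ 2 / n + k ^ 2 / √n), two_mul, pow_add]; ring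
    _ ≤ _ := by
        refine mul_le_mul_of_nonneg_left (Real.exp_le_exp.2 ?_) (by positivity)
        have h1 : √n ≤ (n : ℝ) := by
          rw [Real.sqrt_le_left hn'.le]
          have : (1 : ℝ) ≤ n := by exact_mod_cast hn
          nlinarith
        have h2 : k ^ 2 / (n : ℝ) ≤ k ^ 2 / √n :=
          div_le_div_of_nonneg_left (by positivity) (by positivity) h1
        have h3 : 3 * k ^ 2 / √n = 3 * (k ^ 2 / √n) := by ring
        linarith

/-! ### Summing over pairs of sets and over sizes -/

/-- Stirling's formula turns the number of pairs `(K, L)` times the main factor of the probability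
into `O(1 / n)`: the factor `2 π k` in `(k!) ^ 2` cancels the `k` coming from
`(k - 1)! = k! / k`, so no power of `k` is left over. -/
lemma choose_bound (n l : ℕ) (hn : 0 < n) :
    (n.choose (l + 1) : ℝ) * n.choose l * ((l : ℝ) / n) ^ (2 * (l + 1)) *
      Real.exp (-2 * ((l : ℝ) + 1)) ≤ 1 / n := by
  have hn' : (0 : ℝ) < n := by positivity
  have hk0 : (0 : ℝ) < (l : ℝ) + 1 := by positivity
  have h1 : (n.choose (l + 1) : ℝ) ≤ (n : ℝ) ^ (l + 1) / (l + 1).factorial :=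
    Nat.choose_le_pow_div _ _
  have h2 : (n.choose l : ℝ) ≤ (n : ℝ) ^ l / l.factorial := Nat.choose_le_pow_div _ _
  have hf : ((l + 1).factorial : ℝ) = ((l : ℝ) + 1) * l.factorial := by
    rw [Nat.factorial_succ]; push_cast; ring
  have hst := Stirling.le_factorial_stirling (l + 1)
  have hsq : 2 * Real.pi * ((l : ℝ) + 1) * (((l : ℝ) + 1) ^ (2 * (l + 1)) *
      Real.exp (-2 * ((l : ℝ) + 1))) ≤ ((l + 1).factorial : ℝ) ^ 2 := by
    calc _ = (√(2 * Real.pi * ((l + 1 : ℕ) : ℝ)) *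
          (((l + 1 : ℕ) : ℝ) / Real.exp 1) ^ (l + 1)) ^ 2 := by
          rw [mul_pow, Real.sq_sqrt (by positivity), div_pow, div_pow, ← Real.exp_nat_mul,
            ← Real.exp_nat_mul, ← pow_mul, div_eq_mul_inv, ← Real.exp_neg]
          push_cast
          ring_nf
      _ ≤ _ := by gcongr
  have hpi : (1 : ℝ) ≤ 2 * Real.pi := by linarith [Real.pi_gt_three]
  have hlf : (0 : ℝ) < l.factorial := by positivity
  have hmain : ((l : ℝ) + 1) ^ (2 * (l + 1)) * Real.exp (-2 * ((l : ℝ) + 1))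
      ≤ ((l + 1).factorial : ℝ) * l.factorial := by
    set Y := ((l : ℝ) + 1) ^ (2 * (l + 1)) * Real.exp (-2 * ((l : ℝ) + 1)) with hY
    have hY0 : 0 ≤ Y := by positivity
    have : ((l : ℝ) + 1) * Y ≤ ((l : ℝ) + 1) * (((l + 1).factorial : ℝ) * l.factorial) := by
      calc ((l : ℝ) + 1) * Y ≤ 2 * Real.pi * (((l : ℝ) + 1) * Y) :=
            le_mul_of_one_le_left (by positivity) hpi
        _ ≤ ((l + 1).factorial : ℝ) ^ 2 := by linarith
        _ = _ := by rw [hf]; ring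
    exact le_of_mul_le_mul_left this hk0
  calc _ ≤ (n : ℝ) ^ (l + 1) / (l + 1).factorial * ((n : ℝ) ^ l / l.factorial) *
        (((l : ℝ) + 1) / n) ^ (2 * (l + 1)) * Real.exp (-2 * ((l : ℝ) + 1)) := by
        gcongr; linarith
    _ = 1 / n * ((((l : ℝ) + 1) ^ (2 * (l + 1)) * Real.exp (-2 * ((l : ℝ) + 1))) /
          (((l + 1).factorial : ℝ) * l.factorial)) := by
        have : ((l + 1).factorial : ℝ) ≠ 0 := by positivity
        rw [div_pow]
        field_simp
        ring
    _ ≤ 1 / n * 1 := by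
        gcongr
        exact div_le_one_of_le₀ hmain (by positivity)
    _ = 1 / n := mul_one _

lemma log_sq_bound (n : ℕ) : (Real.log n) ^ 2 ≤ 16 * √n := by
  have h := Real.log_le_rpow_div (Nat.cast_nonneg (α := ℝ) n) (ε := 1 / 4) (by norm_num)
  have h0 : 0 ≤ Real.log (n : ℝ) := Real.log_natCast_nonneg n
  calc (Real.log n) ^ 2 ≤ ((n : ℝ) ^ (1 / 4 : ℝ) / (1 / 4)) ^ 2 := by gcongr
    _ = 16 * √n := by
      rw [div_pow, Real.sqrt_eq_rpow, ← Real.rpow_natCast, ← Real.rpow_mul (by positivity)]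
      norm_num
      ring

lemma card_omega (n : ℕ) : (Fintype.card (Omega n) : ℝ) = ((n : ℝ) ^ n) ^ 4 := by
  simp [Omega]
  ring

open Classical in
/-- The union bound over the pairs `(K, L)` with `|K| = k` and `|L| = k - 1`, for fixed `k`. -/
lemma size_bound (n m : ℕ) (hm : 1 ≤ m) (hn : 0 < n) (k : ℕ) (hk : 2 ≤ k) :
    (∑ K ∈ Finset.powersetCard k (Finset.univ : Finset (Fin n)),
      ∑ L ∈ Finset.powersetCard (k - 1) (Finset.univ : Finset (Fin n)),
        ((Finset.univ.filter fun ω : Omega n => nbrRow n m ω K ⊆ L).card : ℝ))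
      ≤ ((n : ℝ) ^ n) ^ 4 *
        (1 / n * (Real.exp (k / (m + 1)) * Real.exp (3 * (k : ℝ) ^ 2 / √n))) := by
  obtain ⟨l, rfl⟩ : ∃ l, k = l + 1 := ⟨k - 1, by omega⟩
  have hl : 1 ≤ l := by omega
  simp only [Nat.add_sub_cancel]
  set E : ℝ := Real.exp (((l + 1 : ℕ) : ℝ) / (m + 1)) *
    Real.exp (3 * ((l + 1 : ℕ) : ℝ) ^ 2 / √n)
  calc _ ≤ ∑ K ∈ Finset.powersetCard (l + 1) (Finset.univ : Finset (Fin n)),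
      ∑ L ∈ Finset.powersetCard l (Finset.univ : Finset (Fin n)),
        (((n : ℝ) ^ n) ^ 4 * ((l : ℝ) / n) ^ (2 * (l + 1)) *
          (Real.exp (-2 * ((l : ℝ) + 1)) * E)) := by
        refine Finset.sum_le_sum fun K hK => Finset.sum_le_sum fun L hL => ?_
        have hK' := (Finset.mem_powersetCard.1 hK).2
        have hL' := (Finset.mem_powersetCard.1 hL).2
        refine (event_bound n m hm hn K L (by omega) (by omega)).trans (le_of_eq ?_)
        rw [hK', hL', Real.exp_add, Real.exp_add]
        simp only [E]
        push_cast
        ring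
    _ = ((n : ℝ) ^ n) ^ 4 * ((n.choose (l + 1) : ℝ) * n.choose l *
          ((l : ℝ) / n) ^ (2 * (l + 1)) * Real.exp (-2 * ((l : ℝ) + 1)) * E) := by
        simp only [Finset.sum_const, Finset.card_powersetCard, Finset.card_univ, Fintype.card_fin,
          nsmul_eq_mul]
        ring
    _ ≤ _ := by
        have := choose_bound n l hn
        have hE : 0 ≤ E := by positivity
        gcongr

/-- A geometric series with ratio `exp (1 / (m + 1)) > 1` is comparable to its last term. -/
lemma geom_bound (m : ℕ) (ε : ℝ) (n N : ℕ) (hn : 0 < n)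
    (hN : (N : ℝ) ≤ ((m : ℝ) + 1 - ε) * Real.log n) :
    ∑ k ∈ Finset.Icc 2 N, Real.exp ((k : ℝ) / (m + 1))
      ≤ Real.exp (1 / (m + 1)) / (Real.exp (1 / (m + 1)) - 1) *
        (n * (n : ℝ) ^ (-(ε / ((m : ℝ) + 1)))) := by
  have hn' : (0 : ℝ) < n := by positivity
  have hm' : (0 : ℝ) < (m : ℝ) + 1 := by positivity
  set q := Real.exp (1 / ((m : ℝ) + 1)) with hq
  have hq1 : 1 < q := Real.one_lt_exp_iff.2 (by positivity)
  have hpow : ∀ k : ℕ, Real.exp ((k : ℝ) / (m + 1)) = q ^ k := by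
    intro k; rw [hq, ← Real.exp_nat_mul]; congr 1; ring
  have hqN : q ^ N ≤ n * (n : ℝ) ^ (-(ε / ((m : ℝ) + 1))) := by
    rw [← hpow, Real.rpow_def_of_pos hn']
    nth_rewrite 1 [← Real.exp_log hn']
    rw [← Real.exp_add, Real.exp_le_exp, div_le_iff₀ hm']
    refine hN.trans (le_of_eq ?_)
    field_simp
    ring
  simp only [hpow]
  calc ∑ k ∈ Finset.Icc 2 N, q ^ k ≤ ∑ k ∈ Finset.range (N + 1), q ^ k := by
        refine Finset.sum_le_sum_of_subset_of_nonneg ?_ fun _ _ _ => by positivity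
        intro k hk
        simp only [Finset.mem_Icc, Finset.mem_range] at hk ⊢
        omega
    _ = (q ^ (N + 1) - 1) / (q - 1) := geom_sum_eq hq1.ne' _
    _ ≤ q ^ (N + 1) / (q - 1) := by
        have : 0 < q - 1 := by linarith
        gcongr; linarith
    _ = q / (q - 1) * q ^ N := by rw [pow_succ]; ring
    _ ≤ _ := by
        have : 0 < q - 1 := by linarith
        gcongr

/-- The constant `48 (m + 1) ^ 2` bounds `3 k ^ 2 / √n` for all `k ≤ (m + 1) log n`. -/
lemma pr_row (m : ℕ) (hm : 1 ≤ m) (ε : ℝ) (hε0 : 0 < ε) (hε1 : ε < (m : ℝ) + 1)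
    (n : ℕ) (hn : 0 < n) :
    pr n (fun ω => ∃ K : Finset (Fin n), 2 ≤ K.card ∧
        (K.card : ℝ) ≤ ((m : ℝ) + 1 - ε) * Real.log n ∧ (nbrRow n m ω K).card < K.card)
      ≤ Real.exp (48 * ((m : ℝ) + 1) ^ 2) *
        (Real.exp (1 / ((m : ℝ) + 1)) / (Real.exp (1 / ((m : ℝ) + 1)) - 1)) *
        (n : ℝ) ^ (-(ε / ((m : ℝ) + 1))) := by
  classical
  have hn' : (0 : ℝ) < n := by positivity
  have hlog : 0 ≤ Real.log (n : ℝ) := Real.log_natCast_nonneg n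
  have hc0 : 0 ≤ ((m : ℝ) + 1 - ε) * Real.log n := mul_nonneg (by linarith) hlog
  set N := ⌊((m : ℝ) + 1 - ε) * Real.log n⌋₊ with hN
  have hNle : (N : ℝ) ≤ ((m : ℝ) + 1 - ε) * Real.log n := Nat.floor_le hc0
  have hcover : (Finset.univ.filter fun ω : Omega n => ∃ K : Finset (Fin n), 2 ≤ K.card ∧
        (K.card : ℝ) ≤ ((m : ℝ) + 1 - ε) * Real.log n ∧ (nbrRow n m ω K).card < K.card)
      ⊆ (Finset.Icc 2 N).biUnion fun k => (Finset.powersetCard k Finset.univ).biUnion fun K =>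
        (Finset.powersetCard (k - 1) Finset.univ).biUnion fun L =>
          Finset.univ.filter fun ω : Omega n => nbrRow n m ω K ⊆ L := by
    intro ω hω
    obtain ⟨K, h2, hKN, hΓ⟩ := (Finset.mem_filter.1 hω).2
    have hKn : K.card ≤ n := by simpa using Finset.card_le_univ K
    obtain ⟨L, hΓL, hL⟩ := Finset.exists_superset_card_eq (s := nbrRow n m ω K)
      (n := K.card - 1) (by omega) (by rw [Fintype.card_fin]; omega)
    simp only [Finset.mem_biUnion, Finset.mem_Icc, Finset.mem_powersetCard, Finset.mem_filter,
      Finset.mem_univ, true_and, Finset.subset_univ]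
    exact ⟨K.card, ⟨h2, Nat.le_floor hKN⟩, K, rfl, L, hL, hΓL⟩
  have hexp : ∀ k ∈ Finset.Icc 2 N,
      Real.exp (3 * (k : ℝ) ^ 2 / √n) ≤ Real.exp (48 * ((m : ℝ) + 1) ^ 2) := by
    intro k hk
    have hkN : (k : ℝ) ≤ N := by exact_mod_cast (Finset.mem_Icc.1 hk).2
    have h1 : (k : ℝ) ≤ ((m : ℝ) + 1) * Real.log n :=
      (hkN.trans hNle).trans (by gcongr; linarith)
    rw [Real.exp_le_exp, div_le_iff₀ (by positivity)]
    calc 3 * (k : ℝ) ^ 2 ≤ 3 * (((m : ℝ) + 1) * Real.log n) ^ 2 := by gcongr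
      _ = 3 * ((m : ℝ) + 1) ^ 2 * (Real.log n) ^ 2 := by ring
      _ ≤ 3 * ((m : ℝ) + 1) ^ 2 * (16 * √n) := by gcongr; exact log_sq_bound n
      _ = _ := by ring
  unfold pr
  rw [card_omega, div_le_iff₀ (by positivity)]
  set B := Real.exp (48 * ((m : ℝ) + 1) ^ 2)
  calc _ ≤ (((Finset.Icc 2 N).biUnion fun k => (Finset.powersetCard k Finset.univ).biUnion
        fun K => (Finset.powersetCard (k - 1) Finset.univ).biUnion fun L =>
          Finset.univ.filter fun ω : Omega n => nbrRow n m ω K ⊆ L).card : ℝ) := by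
        gcongr
        convert hcover
    _ ≤ ∑ k ∈ Finset.Icc 2 N, ∑ K ∈ Finset.powersetCard k (Finset.univ : Finset (Fin n)),
        ∑ L ∈ Finset.powersetCard (k - 1) (Finset.univ : Finset (Fin n)),
          ((Finset.univ.filter fun ω : Omega n => nbrRow n m ω K ⊆ L).card : ℝ) := by
        norm_cast
        refine Finset.card_biUnion_le.trans (Finset.sum_le_sum fun k _ => ?_)
        refine Finset.card_biUnion_le.trans (Finset.sum_le_sum fun K _ => ?_)
        exact Finset.card_biUnion_le
    _ ≤ ∑ k ∈ Finset.Icc 2 N, ((n : ℝ) ^ n) ^ 4 *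
        (1 / n * (Real.exp ((k : ℝ) / (m + 1)) * B)) := by
        refine Finset.sum_le_sum fun k hk => ?_
        refine (size_bound n m hm hn k (Finset.mem_Icc.1 hk).1).trans ?_
        have := hexp k hk
        gcongr
    _ = ((n : ℝ) ^ n) ^ 4 *
        (1 / n * ((∑ k ∈ Finset.Icc 2 N, Real.exp ((k : ℝ) / (m + 1))) * B)) := by
        rw [Finset.sum_mul, Finset.mul_sum, Finset.mul_sum]
    _ ≤ ((n : ℝ) ^ n) ^ 4 * (1 / n * ((Real.exp (1 / (m + 1)) / (Real.exp (1 / (m + 1)) - 1) *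
        (n * (n : ℝ) ^ (-(ε / ((m : ℝ) + 1))))) * B)) := by
        have := geom_bound m ε n N hn hNle
        gcongr
    _ = _ := by
        field_simp

/-! ### Rows versus columns -/

/-- Exchanging the roles of rows and columns preserves the uniform measure. -/
lemma pr_swap (n : ℕ) (P : Omega n → Prop) :
    pr n (fun ω => P (ω.2.2.1, ω.2.2.2, ω.1, ω.2.1)) = pr n P := by
  classical
  unfold pr
  congr 2
  refine Finset.card_bij' (fun ω _ => (ω.2.2.1, ω.2.2.2, ω.1, ω.2.1))
    (fun ω _ => (ω.2.2.1, ω.2.2.2, ω.1, ω.2.1)) ?_ ?_ ?_ ?_ <;> simp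

lemma nbrCol_eq (n m : ℕ) (ω : Omega n) (K : Finset (Fin n)) :
    nbrCol n m ω K = nbrRow n m (ω.2.2.1, ω.2.2.2, ω.1, ω.2.1) K := by
  unfold nbrCol nbrRow
  congr 1
  ext i
  refine exists_congr fun j => and_congr_right fun _ => ?_
  simp only [IsEdge, RowUnpopular, ColUnpopular]
  tauto

lemma pr_or (n : ℕ) (P Q : Omega n → Prop) : pr n (fun ω => P ω ∨ Q ω) ≤ pr n P + pr n Q := by
  classical
  unfold pr
  rw [← add_div]
  gcongr
  have := Finset.card_union_le (Finset.univ.filter P) (Finset.univ.filter Q)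
  rw [← Finset.filter_or] at this
  norm_cast
  convert this

/-- The probability that `B_{n,m}` contains a Hall obstruction set `K` (of rows or of
columns) with `2 ≤ |K| ≤ (m+1−ε)·log n` and `|Γ(K)| < |K|` is `O(n^{−ε/(m+1)})`. -/
theorem statement_4 (m : ℕ) (hm : 1 ≤ m) (ε : ℝ) (hε0 : 0 < ε) (hε1 : ε < (m : ℝ) + 1) :
    ∃ C : ℝ, 0 < C ∧ ∀ n : ℕ, 2 ≤ n →
      pr n (fun ω =>
        (∃ K : Finset (Fin n), 2 ≤ K.card ∧
            (K.card : ℝ) ≤ ((m : ℝ) + 1 - ε) * Real.log n ∧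
            (nbrRow n m ω K).card < K.card) ∨
        (∃ K : Finset (Fin n), 2 ≤ K.card ∧
            (K.card : ℝ) ≤ ((m : ℝ) + 1 - ε) * Real.log n ∧
            (nbrCol n m ω K).card < K.card))
      ≤ C * (n : ℝ) ^ (-(ε / ((m : ℝ) + 1))) := by
  have hq : 1 < Real.exp (1 / ((m : ℝ) + 1)) := Real.one_lt_exp_iff.2 (by positivity)
  have hq' : 0 < Real.exp (1 / ((m : ℝ) + 1)) - 1 := by linarith
  refine ⟨2 * (Real.exp (48 * ((m : ℝ) + 1) ^ 2) *
    (Real.exp (1 / ((m : ℝ) + 1)) / (Real.exp (1 / ((m : ℝ) + 1)) - 1))), by positivity, ?_⟩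
  intro n hn
  have h1 := pr_row m hm ε hε0 hε1 n (by omega)
  have h2 := h1
  rw [← pr_swap] at h2
  simp only [← nbrCol_eq] at h2
  refine (pr_or n _ _).trans ((add_le_add h1 h2).trans (le_of_eq ?_))
  ring
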